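/- arXiv:2307.11589 — 2 statements merged into one kernel-verified Lean document; each statement's English description precedes it below -/
import Mathlib

section
/- Assume (A,C) is observable with observability index ℓ. Then for every L ≥ ℓ, the restricted behavior 𝓑|_L of the LTI system is a linear subspace of ℝ^{qL} of dimension exactly mL + n. -/
/-!
A trajectory of length `L` is determined by its initial state `x₀` and its inputs
`u(0), …, u(L-1)`, all of which are free. The behavior is therefore the range of the linear map
`trajMap : (x₀, u) ↦ (u; y)` on `ℝ^n × ℝ^{mL}` (`coe_range_trajMap`). The domain has dimension
`mL + n`, so only injectivity of `trajMap` is left (`trajMap_injective`): a vector of the kernel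
has `u = 0`, hence `y(t) = C A^t x₀ = 0` for `t < L`, and since `L ≥ ℓ` this says that `x₀` is in
the kernel of the observability matrix of order `ℓ`, which is trivial by the rank condition.
-/

open Matrix

/-- The input part `u(t) ∈ ℝ^m` of a combined variable `w(t) = (u(t); y(t)) ∈ ℝ^{m+p}`. -/
def uPart (m p : ℕ) (w : ℕ → Fin (m + p) → ℝ) (t : ℕ) : Fin m → ℝ :=
  fun i => w t (Fin.castAdd p i)

/-- The output part `y(t) ∈ ℝ^p` of a combined variable `w(t) = (u(t); y(t)) ∈ ℝ^{m+p}`. -/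
def yPart (m p : ℕ) (w : ℕ → Fin (m + p) → ℝ) (t : ℕ) : Fin p → ℝ :=
  fun j => w t (Fin.natAdd m j)

/-- `w = (u; y)` is a trajectory of length `T` of the LTI system `(A,B,C,D)`:
there is a state sequence `x` with `x(t+1) = A x(t) + B u(t)` for `t+1 < T` and
`y(t) = C x(t) + D u(t)` for `t < T`. -/
def IsTraj (m p n : ℕ) (A : Matrix (Fin n) (Fin n) ℝ) (B : Matrix (Fin n) (Fin m) ℝ)
    (C : Matrix (Fin p) (Fin n) ℝ) (D : Matrix (Fin p) (Fin m) ℝ)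
    (T : ℕ) (w : ℕ → Fin (m + p) → ℝ) : Prop :=
  ∃ x : ℕ → Fin n → ℝ,
    (∀ t, t + 1 < T → x (t + 1) = A *ᵥ x t + B *ᵥ uPart m p w t) ∧
    (∀ t, t < T → yPart m p w t = C *ᵥ x t + D *ᵥ uPart m p w t)

/-- The depth-`L` Hankel matrix of a sequence `w : {0,…,T−1} → ℝ^q`.  Its rows are indexed
by pairs `(b, i)` (block position `b ∈ {0,…,L−1}` and coordinate `i ∈ {0,…,q−1}`) and its
`j`-th column is the stacked vector `(w(j); …; w(j+L−1))`. -/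
def Hankel (q L T : ℕ) (w : ℕ → Fin q → ℝ) : Matrix (Fin L × Fin q) (Fin (T - L + 1)) ℝ :=
  fun bi j => w ((j : ℕ) + (bi.1 : ℕ)) bi.2

/-- The restricted behavior `𝓑|_L ⊆ ℝ^{qL}`: all stacked vectors `(w(0); …; w(L−1))` of
trajectories `w` of length `L`. -/
def Behavior (m p n : ℕ) (A : Matrix (Fin n) (Fin n) ℝ) (B : Matrix (Fin n) (Fin m) ℝ)
    (C : Matrix (Fin p) (Fin n) ℝ) (D : Matrix (Fin p) (Fin m) ℝ) (L : ℕ) :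
    Set (Fin L × Fin (m + p) → ℝ) :=
  { v | ∃ w : ℕ → Fin (m + p) → ℝ, IsTraj m p n A B C D L w ∧
      ∀ (t : Fin L) (i : Fin (m + p)), v (t, i) = w (t : ℕ) i }

/-- The order-`k` observability matrix `[C; CA; …; CA^{k−1}]`. -/
def obsMat (p n : ℕ) (A : Matrix (Fin n) (Fin n) ℝ) (C : Matrix (Fin p) (Fin n) ℝ) (k : ℕ) :
    Matrix (Fin k × Fin p) (Fin n) ℝ :=
  fun ri => (C * A ^ (ri.1 : ℕ)) ri.2

/-- `(A,C)` is observable with observability index `ℓ`: `[C; CA; …; CA^{ℓ−1}]` has rank `n`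
and `ℓ` is the smallest such integer. -/
def ObsIndex (p n : ℕ) (A : Matrix (Fin n) (Fin n) ℝ) (C : Matrix (Fin p) (Fin n) ℝ)
    (ℓ : ℕ) : Prop :=
  (obsMat p n A C ℓ).rank = n ∧ ∀ k < ℓ, (obsMat p n A C k).rank ≠ n

/-- The input `u(t)` as a linear function of the pair `(x₀, u)`; it is `0` for `t ≥ L`. -/
noncomputable def inputMap (m n L : ℕ) (t : ℕ) :
    ((Fin n → ℝ) × (Fin L × Fin m → ℝ)) →ₗ[ℝ] (Fin m → ℝ) :=
  LinearMap.pi fun i =>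
    if h : t < L then (LinearMap.proj (⟨t, h⟩, i)).comp (LinearMap.snd ℝ _ _) else 0

/-- The state `x(t)` as a linear function of the pair `(x₀, u)`. -/
noncomputable def stateMap (m n L : ℕ) (A : Matrix (Fin n) (Fin n) ℝ)
    (B : Matrix (Fin n) (Fin m) ℝ) :
    ℕ → ((Fin n → ℝ) × (Fin L × Fin m → ℝ)) →ₗ[ℝ] (Fin n → ℝ)
  | 0 => LinearMap.fst ℝ _ _
  | t + 1 => A.mulVecLin.comp (stateMap m n L A B t) + B.mulVecLin.comp (inputMap m n L t)

/-- The output `y(t)` as a linear function of the pair `(x₀, u)`. -/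
noncomputable def outputMap (m p n L : ℕ) (A : Matrix (Fin n) (Fin n) ℝ)
    (B : Matrix (Fin n) (Fin m) ℝ) (C : Matrix (Fin p) (Fin n) ℝ) (D : Matrix (Fin p) (Fin m) ℝ)
    (t : ℕ) : ((Fin n → ℝ) × (Fin L × Fin m → ℝ)) →ₗ[ℝ] (Fin p → ℝ) :=
  C.mulVecLin.comp (stateMap m n L A B t) + D.mulVecLin.comp (inputMap m n L t)

/-- The linear map sending an initial state and an input sequence to the stacked trajectory
`(u(0); y(0); …; u(L-1); y(L-1))` they generate. -/
noncomputable def trajMap (m p n L : ℕ) (A : Matrix (Fin n) (Fin n) ℝ)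
    (B : Matrix (Fin n) (Fin m) ℝ) (C : Matrix (Fin p) (Fin n) ℝ)
    (D : Matrix (Fin p) (Fin m) ℝ) :
    ((Fin n → ℝ) × (Fin L × Fin m → ℝ)) →ₗ[ℝ] (Fin L × Fin (m + p) → ℝ) :=
  LinearMap.pi fun ti => Fin.addCases
    (motive := fun _ => ((Fin n → ℝ) × (Fin L × Fin m → ℝ)) →ₗ[ℝ] ℝ)
    (fun i => (LinearMap.proj i).comp (inputMap m n L ti.1))
    (fun j => (LinearMap.proj j).comp (outputMap m p n L A B C D ti.1)) ti.2

section

variable {m p n L : ℕ} (A : Matrix (Fin n) (Fin n) ℝ) (B : Matrix (Fin n) (Fin m) ℝ)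
  (C : Matrix (Fin p) (Fin n) ℝ) (D : Matrix (Fin p) (Fin m) ℝ)

lemma inputMap_apply (z : (Fin n → ℝ) × (Fin L × Fin m → ℝ)) (t : Fin L) (i : Fin m) :
    inputMap m n L t z i = z.2 (t, i) := by
  simp [inputMap]

lemma trajMap_castAdd (z : (Fin n → ℝ) × (Fin L × Fin m → ℝ)) (t : Fin L) (i : Fin m) :
    trajMap m p n L A B C D z (t, Fin.castAdd p i) = inputMap m n L t z i := by
  simp [trajMap]

lemma trajMap_natAdd (z : (Fin n → ℝ) × (Fin L × Fin m → ℝ)) (t : Fin L) (j : Fin p) :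
    trajMap m p n L A B C D z (t, Fin.natAdd m j) = outputMap m p n L A B C D t z j := by
  simp [trajMap]

/-- With zero input the state evolves freely: `x(t) = A^t x₀`. -/
lemma stateMap_zero_input (x : Fin n → ℝ) (t : ℕ) :
    stateMap m n L A B t (x, 0) = (A ^ t) *ᵥ x := by
  induction t with
  | zero => simp [stateMap]
  | succ t ih =>
    have h0 : inputMap m n L t (x, 0) = 0 := by
      ext i
      by_cases h : t < L <;> simp [inputMap, h]
    simp [stateMap, ih, h0, pow_succ']

lemma coe_range_trajMap :
    (LinearMap.range (trajMap m p n L A B C D) : Set (Fin L × Fin (m + p) → ℝ)) =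
      Behavior m p n A B C D L := by
  ext v
  constructor
  · rintro ⟨z, rfl⟩
    -- The trajectory is extended by zero beyond time `L - 1`.
    set w : ℕ → Fin (m + p) → ℝ := fun t k =>
      if h : t < L then trajMap m p n L A B C D z (⟨t, h⟩, k) else 0 with hw
    have hu : ∀ t, t < L → uPart m p w t = inputMap m n L t z := by
      intro t ht
      ext i
      simp [hw, uPart, ht, trajMap_castAdd]
    refine ⟨w, ⟨fun t => stateMap m n L A B t z, ?_, ?_⟩, ?_⟩
    · intro t ht
      rw [hu t (by omega)]
      simp [stateMap]
    · intro t ht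
      rw [hu t ht]
      ext j
      simp [hw, yPart, ht, trajMap_natAdd, outputMap]
    · intro t i
      simp [hw]
  · rintro ⟨w, ⟨x, hx, hy⟩, hv⟩
    set z : (Fin n → ℝ) × (Fin L × Fin m → ℝ) :=
      (x 0, fun ti => w ti.1 (Fin.castAdd p ti.2))
    have hu : ∀ t, t < L → inputMap m n L t z = uPart m p w t := by
      intro t ht
      ext i
      exact inputMap_apply z ⟨t, ht⟩ i
    have hs : ∀ t, t < L → stateMap m n L A B t z = x t := by
      intro t
      induction t with
      | zero => intro _; rfl
      | succ t ih =>
        intro ht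
        rw [hx t ht, ← ih (by omega), ← hu t (by omega)]
        simp [stateMap]
    refine ⟨z, ?_⟩
    ext ⟨t, k⟩
    rw [hv]
    induction k using Fin.addCases with
    | left i => rw [trajMap_castAdd, hu t t.2]; rfl
    | right j =>
      rw [trajMap_natAdd]
      have h := congrFun (hy t t.2) j
      rw [← hs t t.2, ← hu t t.2] at h
      simpa [outputMap, yPart] using h.symm

/-- The observability matrix of order `ℓ` has full column rank, hence trivial kernel. -/
lemma eq_zero_of_obsIndex {ℓ : ℕ} (hobs : ObsIndex p n A C ℓ) (x : Fin n → ℝ)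
    (hx : ∀ t < ℓ, (C * A ^ t) *ᵥ x = 0) : x = 0 := by
  have hker : LinearMap.ker (obsMat p n A C ℓ).mulVecLin = ⊥ := by
    have h := (obsMat p n A C ℓ).mulVecLin.finrank_range_add_finrank_ker
    have hr : Module.finrank ℝ (LinearMap.range (obsMat p n A C ℓ).mulVecLin) = n := hobs.1
    rw [hr, Module.finrank_fin_fun] at h
    exact Submodule.finrank_eq_zero.mp (by omega)
  have hmem : x ∈ LinearMap.ker (obsMat p n A C ℓ).mulVecLin := by
    rw [LinearMap.mem_ker]
    ext ⟨t, j⟩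
    exact congrFun (hx t t.2) j
  simpa [hker] using hmem

lemma trajMap_injective {ℓ : ℕ} (hobs : ObsIndex p n A C ℓ) (hL : ℓ ≤ L) :
    Function.Injective (trajMap m p n L A B C D) := by
  rw [injective_iff_map_eq_zero]
  rintro ⟨x, u⟩ h
  obtain rfl : u = 0 := by
    ext ⟨t, i⟩
    have hi := trajMap_castAdd A B C D (x, u) t i
    rw [h, inputMap_apply] at hi
    exact hi.symm
  obtain rfl : x = 0 := by
    refine eq_zero_of_obsIndex A C hobs x fun t ht => ?_
    have htL : t < L := by omega
    ext j
    have hj := trajMap_natAdd A B C D (x, 0) ⟨t, htL⟩ j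
    have h0 : inputMap m n L t (x, 0) = 0 := by
      ext i
      exact inputMap_apply (x, 0) ⟨t, htL⟩ i
    rw [h] at hj
    simpa [outputMap, stateMap_zero_input, h0] using hj.symm
  rfl

end

/-- For an observable system with observability index `ℓ` and any `L ≥ ℓ`,
the restricted behavior `𝓑|_L` is a linear subspace of `ℝ^{qL}` of dimension `mL + n`. -/
theorem stmt4 (m p n ℓ : ℕ) (hp : 1 ≤ p) (hn : 1 ≤ n)
    (A : Matrix (Fin n) (Fin n) ℝ) (B : Matrix (Fin n) (Fin m) ℝ)
    (C : Matrix (Fin p) (Fin n) ℝ) (D : Matrix (Fin p) (Fin m) ℝ)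
    (hobs : ObsIndex p n A C ℓ)
    (L : ℕ) (hL : ℓ ≤ L) :
    ∃ V : Submodule ℝ (Fin L × Fin (m + p) → ℝ),
      (V : Set (Fin L × Fin (m + p) → ℝ)) = Behavior m p n A B C D L ∧
      Module.finrank ℝ V = m * L + n := by
  refine ⟨LinearMap.range (trajMap m p n L A B C D), coe_range_trajMap A B C D, ?_⟩
  rw [LinearMap.finrank_range_of_inj (trajMap_injective A B C D hobs hL)]
  simp [Module.finrank_prod]
  ring
end

section
/- Assume (A,C) is observable with observability index ℓ. Let d ≥ ℓ+1, let w be a trajectory of length T of the LTI system with rank(𝓗_d(w)) = md + n, and let R_d ∈ ℝ^{(pd−n)×qd} have full row rank and satisfy R_d·𝓗_d(w) = 0. Let L ≥ d, let Γ ∈ ℝ^{(pL−n)×qL} be the shift matrix built from R_d, and assume rank(Γ) = pL − n. Let P ∈ ℝ^{qL×(mL+n)} be a matrix whose columns form a basis of the kernel of Γ. Then a vector w̄ ∈ ℝ^{qL} belongs to the restricted behavior 𝓑|_L if and only if there exists β ∈ ℝ^{mL+n} with P·β = w̄; moreover, such β is unique. -/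
/-!
The restricted behavior `𝓑|_L` is the range of the linear map `responseMap` that sends an initial
state and an input sequence to the resulting stacked input/output vector. Hence its dimension is at
most `mL + n`, with equality when `L ≥ ℓ`, because observability makes that map injective
(`responseMap_injective`).

The columns of `𝓗_d(w)` are windows of a trajectory, so they lie in `𝓑|_d`. As their span has
dimension `md + n ≥ dim 𝓑|_d`, it is all of `𝓑|_d`, and `R_d` annihilates `𝓑|_d`
(`annihilates_behavior`). Every row of `Γ` tests a length-`d` window against a row of `R_d`, and
windows of trajectories are trajectories, so `𝓑|_L ⊆ ker Γ` (`shiftMat_mulVec_behavior`). Finally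
`ker Γ` is the range of the injective matrix `P`, of dimension `mL + n = dim 𝓑|_L`, so the
inclusion is an equality.
-/

open Matrix

/-- The shift matrix `Γ ∈ ℝ^{(g+(L−d)p)×qL}` built from `R ∈ ℝ^{g×qd}`: its first `g` rows
are the rows of `R` each followed by `q(L−d)` zeros; for each `k = 1,…,L−d`, the next `p`
rows are the first `p` rows of `R` preceded by `qk` zeros and followed by `q(L−d−k)` zeros.
Rows are indexed by `Fin (g + (L−d)*p)`; columns by pairs (block position, coordinate). -/
def shiftMat (q d L g p : ℕ) (R : Matrix (Fin g) (Fin d × Fin q) ℝ) :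
    Matrix (Fin (g + (L - d) * p)) (Fin L × Fin q) ℝ :=
  fun r c =>
    if hr : (r : ℕ) < g then
      -- row `r` of `R` followed by zeros
      if hb : (c.1 : ℕ) < d then R ⟨(r : ℕ), hr⟩ (⟨(c.1 : ℕ), hb⟩, c.2) else 0
    else
      -- row `s` (one of the first `p` rows of `R`), shifted by `k` block positions
      (if h : ((r : ℕ) - g) / p + 1 ≤ (c.1 : ℕ) ∧
              (c.1 : ℕ) - (((r : ℕ) - g) / p + 1) < d ∧ ((r : ℕ) - g) % p < g then
        R ⟨((r : ℕ) - g) % p, h.2.2⟩ (⟨(c.1 : ℕ) - (((r : ℕ) - g) / p + 1), h.2.1⟩, c.2)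
      else 0)

/-- The state at time `t` from initial state `x₀` under the input sequence `u`. -/
def stateAt {m n : ℕ} (A : Matrix (Fin n) (Fin n) ℝ) (B : Matrix (Fin n) (Fin m) ℝ)
    (x₀ : Fin n → ℝ) (u : ℕ → Fin m → ℝ) : ℕ → Fin n → ℝ
  | 0 => x₀
  | t + 1 => A *ᵥ stateAt A B x₀ u t + B *ᵥ u t

/-- Extension by zero of a stacked input vector of length `L` to an input sequence on `ℕ`. -/
def extendInput {m L : ℕ} (u : Fin L × Fin m → ℝ) (t : ℕ) : Fin m → ℝ :=
  fun i => if h : t < L then u (⟨t, h⟩, i) else 0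

lemma extendInput_add {m L : ℕ} (u v : Fin L × Fin m → ℝ) (t : ℕ) :
    extendInput (u + v) t = extendInput u t + extendInput v t := by
  funext i
  by_cases h : t < L <;> simp [extendInput, h]

lemma extendInput_smul {m L : ℕ} (c : ℝ) (u : Fin L × Fin m → ℝ) (t : ℕ) :
    extendInput (c • u) t = c • extendInput u t := by
  funext i
  by_cases h : t < L <;> simp [extendInput, h]

lemma stateAt_add {m n : ℕ} (A : Matrix (Fin n) (Fin n) ℝ) (B : Matrix (Fin n) (Fin m) ℝ)
    {L : ℕ} (x y : Fin n → ℝ) (u v : Fin L × Fin m → ℝ) (t : ℕ) :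
    stateAt A B (x + y) (extendInput (u + v)) t =
      stateAt A B x (extendInput u) t + stateAt A B y (extendInput v) t := by
  induction t with
  | zero => rfl
  | succ t ih =>
    simp only [stateAt, ih, extendInput_add, mulVec_add]
    abel

lemma stateAt_smul {m n : ℕ} (A : Matrix (Fin n) (Fin n) ℝ) (B : Matrix (Fin n) (Fin m) ℝ)
    {L : ℕ} (c : ℝ) (x : Fin n → ℝ) (u : Fin L × Fin m → ℝ) (t : ℕ) :
    stateAt A B (c • x) (extendInput (c • u)) t = c • stateAt A B x (extendInput u) t := by
  induction t with
  | zero => rfl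
  | succ t ih => simp only [stateAt, ih, extendInput_smul, mulVec_smul, smul_add]

/-- The linear map sending an initial state and a stacked input of length `L` to the stacked
input/output vector of the resulting trajectory. -/
def responseMap (m p n : ℕ) (A : Matrix (Fin n) (Fin n) ℝ) (B : Matrix (Fin n) (Fin m) ℝ)
    (C : Matrix (Fin p) (Fin n) ℝ) (D : Matrix (Fin p) (Fin m) ℝ) (L : ℕ) :
    ((Fin n → ℝ) × (Fin L × Fin m → ℝ)) →ₗ[ℝ] (Fin L × Fin (m + p) → ℝ) where
  toFun xu := fun ti => Fin.addCases (fun i => xu.2 (ti.1, i))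
    (fun j => (C *ᵥ stateAt A B xu.1 (extendInput xu.2) ti.1
      + D *ᵥ extendInput xu.2 ti.1) j) ti.2
  map_add' a b := by
    funext ⟨t, i⟩
    refine Fin.addCases (fun i => ?_) (fun j => ?_) i
    · simp
    · simp [stateAt_add, extendInput_add, mulVec_add]
      ring
  map_smul' c a := by
    funext ⟨t, i⟩
    refine Fin.addCases (fun i => ?_) (fun j => ?_) i
    · simp
    · simp [stateAt_smul, extendInput_smul, mulVec_smul]
      ring

section System

variable {m p n : ℕ} {A : Matrix (Fin n) (Fin n) ℝ} {B : Matrix (Fin n) (Fin m) ℝ}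
    {C : Matrix (Fin p) (Fin n) ℝ} {D : Matrix (Fin p) (Fin m) ℝ}

lemma mem_behavior_iff {L : ℕ} (v : Fin L × Fin (m + p) → ℝ) :
    v ∈ Behavior m p n A B C D L ↔ v ∈ (responseMap m p n A B C D L).range := by
  constructor
  · rintro ⟨w, ⟨x, hx, hy⟩, hv⟩
    set u : Fin L × Fin m → ℝ := fun ti => v (ti.1, Fin.castAdd p ti.2) with hu
    have hext : ∀ t, t < L → extendInput u t = uPart m p w t := by
      intro t ht
      funext i
      simp [extendInput, ht, hu, uPart, hv]
    have hst : ∀ t, t < L → stateAt A B (x 0) (extendInput u) t = x t := by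
      intro t
      induction t with
      | zero => intro _; rfl
      | succ t ih =>
        intro ht
        rw [hx t ht, stateAt, ih (by omega), hext t (by omega)]
    refine ⟨(x 0, u), ?_⟩
    funext ⟨t, i⟩
    refine Fin.addCases (fun i => ?_) (fun j => ?_) i
    · simp [responseMap, hu]
    · have := congrFun (hy t t.2) j
      simp only [responseMap, LinearMap.coe_mk, AddHom.coe_mk, Fin.addCases_right]
      rw [hst t t.2, hext t t.2, ← this, hv]
      rfl
  · rintro ⟨⟨x₀, u⟩, rfl⟩
    set w : ℕ → Fin (m + p) → ℝ := fun t => Fin.addCases (extendInput u t)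
      (C *ᵥ stateAt A B x₀ (extendInput u) t + D *ᵥ extendInput u t) with hw
    have hu : ∀ t, uPart m p w t = extendInput u t := by
      intro t; funext i; simp [uPart, hw]
    refine ⟨w, ⟨stateAt A B x₀ (extendInput u), ?_, ?_⟩, ?_⟩
    · intro t _; rw [hu]; rfl
    · intro t _; rw [hu]; funext j; simp [yPart, hw]
    · intro t i
      refine Fin.addCases (fun i => ?_) (fun j => ?_) i
      · simp [responseMap, hw, extendInput]
      · simp [responseMap, hw]

/-- Every length-`d` window of a trajectory lies in `𝓑|_d`. -/
lemma window_mem_behavior {T d k : ℕ} {w : ℕ → Fin (m + p) → ℝ} (hw : IsTraj m p n A B C D T w)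
    (hk : k + d ≤ T) :
    (fun c : Fin d × Fin (m + p) => w (k + c.1) c.2) ∈ Behavior m p n A B C D d := by
  obtain ⟨x, hx, hy⟩ := hw
  refine ⟨fun t => w (k + t), ⟨fun t => x (k + t), ?_, ?_⟩, fun _ _ => rfl⟩
  · intro t ht
    exact hx (k + t) (by omega)
  · intro t ht
    exact hy (k + t) (by omega)

lemma stateAt_zero_input {x₀ : Fin n → ℝ} (t : ℕ) :
    stateAt A B x₀ (fun _ => 0) t = (A ^ t) *ᵥ x₀ := by
  induction t with
  | zero => simp [stateAt]
  | succ t ih => simp [stateAt, ih, pow_succ']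

lemma injective_of_rank_eq {ι : Type*} [Fintype ι] {k : ℕ} {M : Matrix ι (Fin k) ℝ}
    (h : M.rank = k) : Function.Injective M.mulVecLin := by
  rw [← LinearMap.ker_eq_bot]
  have := M.mulVecLin.finrank_range_add_finrank_ker
  rw [← Submodule.finrank_eq_zero (R := ℝ)]
  rw [Matrix.rank] at h
  simp at this
  omega

/-- The input is read off the response; for zero input, the outputs `C Aᵗ x₀`, `t < ℓ`,
determine `x₀`. -/
lemma responseMap_injective {ℓ L : ℕ} (hobs : ObsIndex p n A C ℓ) (hL : ℓ ≤ L) :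
    Function.Injective (responseMap m p n A B C D L) := by
  rw [← LinearMap.ker_eq_bot, LinearMap.ker_eq_bot']
  rintro ⟨x₀, u⟩ h
  have hu : u = 0 := by
    funext ⟨t, i⟩
    simpa [responseMap] using congrFun h (t, Fin.castAdd p i)
  subst hu
  have hext : extendInput (0 : Fin L × Fin m → ℝ) = fun _ => 0 := by
    funext t i
    simp [extendInput]
  have hx : (obsMat p n A C ℓ).mulVecLin x₀ = 0 := by
    funext ⟨t, j⟩
    have := congrFun h (⟨t, by omega⟩, Fin.natAdd m j)
    simp only [responseMap, LinearMap.coe_mk, AddHom.coe_mk, Fin.addCases_right, hext,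
      stateAt_zero_input, mulVec_zero, add_zero, mulVec_mulVec] at this
    exact this
  have := injective_of_rank_eq hobs.1 (hx.trans (map_zero _).symm)
  rw [this]
  rfl

lemma finrank_responseDomain (L : ℕ) :
    Module.finrank ℝ ((Fin n → ℝ) × (Fin L × Fin m → ℝ)) = m * L + n := by
  simp [add_comm, mul_comm]

/-- A matrix that annihilates a Hankel matrix of rank `md + n` annihilates all of `𝓑|_d`, since
the Hankel columns then span `𝓑|_d`. -/
lemma annihilates_behavior {d T g : ℕ} (hT : d ≤ T) {w : ℕ → Fin (m + p) → ℝ}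
    (hw : IsTraj m p n A B C D T w) (hrank : (Hankel (m + p) d T w).rank = m * d + n)
    {R : Matrix (Fin g) (Fin d × Fin (m + p)) ℝ} (hR : R * Hankel (m + p) d T w = 0)
    {v : Fin d × Fin (m + p) → ℝ} (hv : v ∈ Behavior m p n A B C D d) : R *ᵥ v = 0 := by
  have hle : (Hankel (m + p) d T w).mulVecLin.range ≤ (responseMap m p n A B C D d).range := by
    rw [Matrix.range_mulVecLin, Submodule.span_le]
    rintro _ ⟨j, rfl⟩
    exact (mem_behavior_iff _).1 (window_mem_behavior (k := j) hw (by omega))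
  have heq := Submodule.eq_of_le_of_finrank_le hle (by
    have h1 := (responseMap m p n A B C D d).finrank_range_le
    rw [finrank_responseDomain] at h1
    rw [Matrix.rank] at hrank
    omega)
  rw [mem_behavior_iff, ← heq] at hv
  obtain ⟨β, rfl⟩ := hv
  rw [mulVecLin_apply, mulVec_mulVec, hR, zero_mulVec]

end System

/-- Pairing a block row shifted by `k` positions with `v` pairs the row with the window of `v`
starting at `k`. -/
lemma sum_shifted_row {q d L k : ℕ} (hk : k + d ≤ L) (f : Fin d × Fin q → ℝ)
    (v : ℕ → Fin q → ℝ) :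
    ∑ c : Fin L × Fin q, (if h : k ≤ (c.1 : ℕ) ∧ (c.1 : ℕ) - k < d then
      f (⟨(c.1 : ℕ) - k, h.2⟩, c.2) else 0) * v c.1 c.2 =
    ∑ c : Fin d × Fin q, f c * v (k + c.1) c.2 := by
  symm
  refine Finset.sum_of_injOn (fun c => (⟨k + c.1, by omega⟩, c.2)) ?_ (by simp) ?_ ?_
  · rintro ⟨a, i⟩ _ ⟨b, j⟩ _ h
    simpa [Prod.ext_iff, Fin.ext_iff] using h
  · rintro ⟨a, i⟩ _ h
    rw [dif_neg, zero_mul]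
    rintro ⟨h1, h2⟩
    refine h ⟨(⟨a - k, h2⟩, i), by simp, ?_⟩
    simp only [Prod.mk.injEq, and_true]
    ext
    simp only at h1 ⊢
    omega
  · rintro ⟨a, i⟩ _
    simp

lemma shiftMat_mulVec_behavior {m p n : ℕ} {A : Matrix (Fin n) (Fin n) ℝ}
    {B : Matrix (Fin n) (Fin m) ℝ} {C : Matrix (Fin p) (Fin n) ℝ} {D : Matrix (Fin p) (Fin m) ℝ}
    {d L g : ℕ} (hp : 1 ≤ p) (hL : d ≤ L) {R : Matrix (Fin g) (Fin d × Fin (m + p)) ℝ}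
    (hR : ∀ v ∈ Behavior m p n A B C D d, R *ᵥ v = 0)
    {v : Fin L × Fin (m + p) → ℝ} (hv : v ∈ Behavior m p n A B C D L) :
    shiftMat (m + p) d L g p R *ᵥ v = 0 := by
  obtain ⟨w, hw, hvw⟩ := hv
  have hwin : ∀ k, k + d ≤ L → ∀ s : Fin g,
      ∑ c : Fin d × Fin (m + p), R s c * w (k + c.1) c.2 = 0 := fun k hk s =>
    congrFun (hR _ (window_mem_behavior hw hk)) s
  have hv' : v = fun c => w c.1 c.2 := funext fun c => hvw c.1 c.2
  subst hv'
  funext r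
  by_cases hr : (r : ℕ) < g
  · rw [Pi.zero_apply, ← hwin 0 (by omega) ⟨r, hr⟩, ← sum_shifted_row (L := L) (by omega)]
    simp [mulVec, dotProduct, shiftMat, hr]
  · have hk : ((r : ℕ) - g) / p + 1 + d ≤ L := by
      have : ((r : ℕ) - g) / p < L - d := by
        rw [Nat.div_lt_iff_lt_mul (by omega)]
        omega
      omega
    by_cases hs : ((r : ℕ) - g) % p < g
    · rw [Pi.zero_apply, ← hwin _ hk ⟨_, hs⟩, ← sum_shifted_row (L := L) hk]
      simp [mulVec, dotProduct, shiftMat, hr, hs]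
    -- a shifted row of index `≥ g` is zero by definition of `shiftMat`
    · simp [mulVec, dotProduct, shiftMat, hr, hs]

/-- With `R_d` a full-row-rank left-kernel matrix of `𝓗_d(w)`
(`rank 𝓗_d(w) = md + n`, `d ≥ ℓ+1`), `Γ` the shift matrix built from `R_d` for `L ≥ d`
with `rank Γ = pL − n`, and `P` a matrix whose columns form a basis of `ker Γ`:
`w̄ ∈ 𝓑|_L ↔ ∃ β, P·β = w̄`, and such `β` is unique. -/
theorem stmt10 (m p n ℓ : ℕ) (hp : 1 ≤ p) (hn : 1 ≤ n)
    (A : Matrix (Fin n) (Fin n) ℝ) (B : Matrix (Fin n) (Fin m) ℝ)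
    (C : Matrix (Fin p) (Fin n) ℝ) (D : Matrix (Fin p) (Fin m) ℝ)
    (hobs : ObsIndex p n A C ℓ)
    (d T : ℕ) (hd : ℓ + 1 ≤ d) (hT : d ≤ T)
    (w : ℕ → Fin (m + p) → ℝ) (hw : IsTraj m p n A B C D T w)
    (hrankd : (Hankel (m + p) d T w).rank = m * d + n)
    (Rd : Matrix (Fin (p * d - n)) (Fin d × Fin (m + p)) ℝ)
    (hRdrank : Rd.rank = p * d - n)
    (hRd : Rd * Hankel (m + p) d T w = 0)
    (L : ℕ) (hL : d ≤ L)
    (hΓrank : (shiftMat (m + p) d L (p * d - n) p Rd).rank = p * L - n)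
    (P : Matrix (Fin L × Fin (m + p)) (Fin (m * L + n)) ℝ)
    (hΓP : shiftMat (m + p) d L (p * d - n) p Rd * P = 0)
    (hPcols : LinearIndependent ℝ (fun j : Fin (m * L + n) => fun i => P i j))
    (hPspan : ∀ v : Fin L × Fin (m + p) → ℝ,
      shiftMat (m + p) d L (p * d - n) p Rd *ᵥ v = 0 →
        ∃ β : Fin (m * L + n) → ℝ, P *ᵥ β = v) :
    ∀ wbar : Fin L × Fin (m + p) → ℝ,
      (wbar ∈ Behavior m p n A B C D L ↔ ∃ β : Fin (m * L + n) → ℝ, P *ᵥ β = wbar) ∧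
      (∀ β₁ β₂ : Fin (m * L + n) → ℝ, P *ᵥ β₁ = wbar → P *ᵥ β₂ = wbar → β₁ = β₂) := by
  have hsub : ∀ v ∈ Behavior m p n A B C D L, ∃ β, P *ᵥ β = v := fun v hv =>
    hPspan v (shiftMat_mulVec_behavior hp hL
      (fun _ hu => annihilates_behavior hT hw hrankd hRd hu) hv)
  have hPinj : Function.Injective P.mulVecLin := Matrix.mulVec_injective_iff.2 hPcols
  have hle : (responseMap m p n A B C D L).range ≤ P.mulVecLin.range :=
    fun v hv => hsub v ((mem_behavior_iff v).2 hv)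
  have heq := Submodule.eq_of_le_of_finrank_le hle (by
    rw [LinearMap.finrank_range_of_inj hPinj,
      LinearMap.finrank_range_of_inj (responseMap_injective hobs (by omega)),
      finrank_responseDomain]
    simp)
  intro wbar
  refine ⟨?_, fun β₁ β₂ h₁ h₂ => hPinj (h₁.trans h₂.symm)⟩
  rw [mem_behavior_iff, heq]
  rfl
end
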